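/- arXiv:2605.08337 — 2 statements merged into one kernel-verified Lean document; each statement's English description precedes it below -/
import Mathlib

section
/- Let ρ_{AB} be a density matrix on H_A ⊗ H_B with marginals ρ_A and ρ_B. Then the trace-norm distance of ρ_{AB} from the product of its marginals is bounded by the smaller single-system entropy: ‖ρ_{AB} − ρ_A ⊗ ρ_B‖₁ ≤ 2·√(min(s(ρ_A), s(ρ_B))). -/
open scoped BigOperators Kronecker Matrix ComplexOrder

noncomputable section
namespace Paper

/-- A density matrix: a positive semidefinite operator of trace one. -/
def IsDensityMatrix {n : Type*} [Fintype n] (ρ : Matrix n n ℂ) : Prop :=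
  ρ.PosSemidef ∧ ρ.trace = 1

/-- The operator norm `‖A‖_∞` (largest singular value) of a matrix,
as the operator norm of the induced map on Euclidean space. -/
noncomputable def opNorm {n : Type*} [Fintype n] [DecidableEq n] (A : Matrix n n ℂ) : ℝ :=
  ‖LinearMap.toContinuousLinearMap (Matrix.toEuclideanLin A)‖

/-- Von Neumann entropy `−∑ λ ln λ` over the eigenvalues; since `Real.log 0 = 0`
in Mathlib, the convention `0 · ln 0 = 0` is automatic. -/
noncomputable def entropy {n : Type*} [Fintype n] [DecidableEq n] (σ : Matrix n n ℂ) : ℝ :=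
  if h : σ.IsHermitian then -∑ i, h.eigenvalues i * Real.log (h.eigenvalues i) else 0

/-- The variance `Var_ρ(A) = Tr[ρ A† A] − |Tr[ρ A]|²`. -/
noncomputable def variance {n : Type*} [Fintype n] (ρ A : Matrix n n ℂ) : ℝ :=
  (ρ * (Aᴴ * A)).trace.re - ‖(ρ * A).trace‖ ^ 2

/-- The trace norm `‖A‖₁ = Tr √(A†A)`: the sum of the singular values. -/
noncomputable def traceNorm {n : Type*} [Fintype n] [DecidableEq n] (A : Matrix n n ℂ) : ℝ :=
  ∑ i, Real.sqrt ((Matrix.posSemidef_conjTranspose_mul_self A).1.eigenvalues i)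

/-- The pure state `|v⟩⟨v|` associated with a vector `v`. -/
def pureState {n : Type*} (v : n → ℂ) : Matrix n n ℂ :=
  Matrix.of fun x y => v x * (starRingEnd ℂ) (v y)

/-- The expectation value `⟨v|M|v⟩`. -/
noncomputable def expval {n : Type*} [Fintype n] (M : Matrix n n ℂ) (v : n → ℂ) : ℂ :=
  ∑ x, ∑ y, (starRingEnd ℂ) (v x) * M x y * v y

variable {N : ℕ} {d : Fin N → Type*} [∀ k, Fintype (d k)] [∀ k, DecidableEq (d k)]

/-- Extension of a local operator on the `k`-th factor to the `N`-fold tensor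
product `H = H_1 ⊗ ⋯ ⊗ H_N`, tensoring with the identity on every other factor.
(The tensor product is realized with index set `∀ j, d j`.) -/
def extendAt (k : Fin N) (A : Matrix (d k) (d k) ℂ) : Matrix (∀ j, d j) (∀ j, d j) ℂ :=
  Matrix.of fun x y => if ∀ j, j ≠ k → x j = y j then A (x k) (y k) else 0

/-- Reduced density matrix on the `k`-th factor: partial trace over all other factors. -/
noncomputable def reduce (k : Fin N) (ρ : Matrix (∀ j, d j) (∀ j, d j) ℂ) :
    Matrix (d k) (d k) ℂ :=
  Matrix.of fun a b => ∑ x : ∀ j, d j, if x k = a then ρ x (Function.update x k b) else 0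

/-- The marginal of a bipartite state on the first factor (partial trace over `H_B`). -/
noncomputable def margA {a b : Type*} [Fintype a] [Fintype b]
    (ρ : Matrix (a × b) (a × b) ℂ) : Matrix a a ℂ :=
  Matrix.of fun x y => ∑ z, ρ (x, z) (y, z)

/-- The marginal of a bipartite state on the second factor (partial trace over `H_A`). -/
noncomputable def margB {a b : Type*} [Fintype a] [Fintype b]
    (ρ : Matrix (a × b) (a × b) ℂ) : Matrix b b ℂ :=
  Matrix.of fun x y => ∑ z, ρ (z, x) (z, y)

/-!
For a pure state `ψ` with marginals `A` and `B`, and `s > 0` with `entropy A ≤ s ^ 2`, one has the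
operator inequality `|ψ⟩⟨ψ| ≤ s + A ⊗ B`. Indeed `(1 ⊗ B) ψ = (A ⊗ 1) ψ`, so `K = s + A ⊗ B` maps
`w = ((s + A²)⁻¹ ⊗ 1) ψ` to `ψ`, and completing the square gives `|ψ⟩⟨ψ| ≤ K` as soon as
`⟨w, K w⟩ ≤ 1`. The left side is `∑ p / (s + p²)` over the eigenvalues `p` of `A`, and a logarithm
inequality bounds it by `1` under the entropy hypothesis.

Compressing to the range of a projection `Q` turns the operator inequality into
`Tr Q (|ψ⟩⟨ψ| - A ⊗ B) ≤ s`. A mixed state inherits this bound from a purification, whose ancilla is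
attached to the second system so that the first marginal does not change. Finally, the trace norm
of a traceless Hermitian matrix is twice its largest expectation over projections.
-/

section Entropy

-- Comes from `2 * x / (x + 2) ≤ log (1 + x)` at `1 + x = p⁻²`.
lemma one_add_log_le_one_sub_log_mul_sq {p : ℝ} (hp : 0 < p) (hp1 : p ≤ 1) :
    1 + Real.log p ≤ (1 - Real.log p) * p ^ 2 := by
  have hsq : p ^ 2 ≤ 1 := pow_le_one₀ hp.le hp1
  have hlog := Real.le_log_one_add_of_nonneg (x := (p ^ 2)⁻¹ - 1)
    (sub_nonneg.2 (one_le_inv₀ (by positivity) |>.2 hsq))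
  have hden : (p ^ 2)⁻¹ - 1 + 2 = (1 + p ^ 2) / p ^ 2 := by
    field_simp
    ring
  have hlhs : 2 * ((p ^ 2)⁻¹ - 1) / ((p ^ 2)⁻¹ - 1 + 2) = 2 * (1 - p ^ 2) / (1 + p ^ 2) := by
    rw [hden]
    field_simp
  rw [hlhs, add_sub_cancel, Real.log_inv, Real.log_pow, div_le_iff₀ (by positivity)] at hlog
  push_cast at hlog
  linarith

lemma inv_add_sq_le {s p : ℝ} (hs : 0 < s) (hs1 : s ≤ 1) (hp : 0 < p) (hp1 : p ≤ 1) :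
    (s + p ^ 2)⁻¹ ≤ (s - Real.log p) / (s * (1 + s)) := by
  have hlog : Real.log p ≤ 0 := Real.log_nonpos hp.le hp1
  -- With denominators cleared, the claim is affine in `s`; it remains to check `s = 0` and `s = 1`.
  have hzero : 0 ≤ -Real.log p * p ^ 2 := by nlinarith [sq_nonneg p]
  have hone : 0 ≤ p ^ 2 - Real.log p - 1 - Real.log p * p ^ 2 := by
    linarith [one_add_log_le_one_sub_log_mul_sq hp hp1]
  rw [inv_eq_one_div, div_le_div_iff₀ (by positivity) (by positivity)]
  linarith [mul_nonneg (sub_nonneg.2 hs1) hzero, mul_nonneg hs.le hone]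

lemma sum_div_add_sq_le_one {ι : Type*} [Fintype ι] {p : ι → ℝ} (hp : ∀ i, 0 ≤ p i)
    (hsum : ∑ i, p i = 1) {s : ℝ} (hs : 0 < s) (hent : ∑ i, Real.negMulLog (p i) ≤ s ^ 2) :
    ∑ i, p i / (s + p i ^ 2) ≤ 1 := by
  rcases le_total 1 s with h1 | h1
  · rw [← hsum]
    exact Finset.sum_le_sum fun i _ => div_le_self (hp i) (by linarith [sq_nonneg (p i)])
  have hp1 (i : ι) : p i ≤ 1 :=
    hsum ▸ Finset.single_le_sum (fun j _ => hp j) (Finset.mem_univ i)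
  have hterm (i : ι) :
      p i / (s + p i ^ 2) ≤ (s * p i + Real.negMulLog (p i)) / (s * (1 + s)) := by
    rcases (hp i).eq_or_lt with h0 | h0
    · simp [← h0]
    · calc p i / (s + p i ^ 2) = p i * (s + p i ^ 2)⁻¹ := div_eq_mul_inv _ _
        _ ≤ p i * ((s - Real.log (p i)) / (s * (1 + s))) := by
          gcongr
          exact inv_add_sq_le hs h1 h0 (hp1 i)
        _ = _ := by
          rw [Real.negMulLog]
          ring
  calc ∑ i, p i / (s + p i ^ 2)
      ≤ ∑ i, (s * p i + Real.negMulLog (p i)) / (s * (1 + s)) :=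
        Finset.sum_le_sum fun i _ => hterm i
    _ = (s + ∑ i, Real.negMulLog (p i)) / (s * (1 + s)) := by
      rw [← Finset.sum_div, Finset.sum_add_distrib, ← Finset.mul_sum, hsum, mul_one]
    _ ≤ 1 := by
      rw [div_le_one (by positivity)]
      linarith

lemma entropy_eq_sum_negMulLog {n : Type*} [Fintype n] [DecidableEq n] {σ : Matrix n n ℂ}
    (hσ : σ.IsHermitian) : entropy σ = ∑ i, Real.negMulLog (hσ.eigenvalues i) := by
  simp [entropy, hσ, Real.negMulLog]

end Entropy

section FunctionalCalculus

variable {n : Type*} [Fintype n] [DecidableEq n]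

lemma continuousOn_spectrum (f : ℝ → ℝ) (A : Matrix n n ℂ) : ContinuousOn f (spectrum ℝ A) :=
  A.finite_real_spectrum.continuousOn f

lemma trace_cfc {A : Matrix n n ℂ} (hA : A.IsHermitian) (f : ℝ → ℝ) :
    (cfc f A).trace = ((∑ i, f (hA.eigenvalues i) : ℝ) : ℂ) := by
  rw [hA.cfc_eq, Matrix.IsHermitian.cfc, Unitary.conjStarAlgAut_apply, Matrix.trace_mul_cycle,
    Unitary.coe_star_mul_self, Matrix.one_mul, Matrix.trace_diagonal]
  simp

lemma sum_eigenvalues_eq_re_trace {A : Matrix n n ℂ} (hA : A.IsHermitian) :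
    ∑ i, hA.eigenvalues i = A.trace.re := by
  simp [hA.trace_eq_sum_eigenvalues]

lemma traceNorm_eq_sum_abs_eigenvalues {A : Matrix n n ℂ} (hA : A.IsHermitian) :
    traceNorm A = ∑ i, |hA.eigenvalues i| := by
  have hA' : IsSelfAdjoint A := hA
  have hsqrt : cfc Real.sqrt (Aᴴ * A) = cfc (fun x : ℝ => |x|) A := by
    have hsq : Aᴴ * A = cfc (fun x : ℝ => x ^ 2) A := by
      rw [hA.eq, ← pow_two, cfc_pow_id A 2 hA']
    rw [hsq, ← cfc_comp' Real.sqrt (fun x => x ^ 2) A]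
    simp only [Real.sqrt_sq_eq_abs]
  have h := congrArg (fun X => (Matrix.trace X).re) hsqrt
  simp only [trace_cfc hA, trace_cfc (Matrix.isHermitian_conjTranspose_mul_self A),
    Complex.ofReal_re] at h
  exact h

lemma traceNorm_le_of_forall_isStarProjection {A : Matrix n n ℂ} (hA : A.IsHermitian)
    (htr : A.trace = 0) {c : ℝ}
    (h : ∀ P : Matrix n n ℂ, IsStarProjection P → (P * A).trace.re ≤ c) :
    traceNorm A ≤ 2 * c := by
  let χ : ℝ → ℝ := fun x => if 0 < x then 1 else 0
  have hχ : IsStarProjection (cfc χ A) := by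
    refine ⟨?_, cfc_predicate χ A⟩
    rw [IsIdempotentElem, ← cfc_mul χ χ A (continuousOn_spectrum _ A) (continuousOn_spectrum _ A)]
    congr! 2
    simp [χ]
  have hmul : cfc χ A * A = cfc (fun x : ℝ => x⁺) A := by
    have hA' : IsSelfAdjoint A := hA
    nth_rw 2 [← cfc_id' ℝ A hA']
    rw [← cfc_mul χ (fun x => x) A (continuousOn_spectrum _ A)]
    congr! 2 with x
    rcases lt_or_ge 0 x with hx | hx
    · simp [χ, hx, posPart_of_nonneg hx.le]
    · simp [χ, hx.not_gt, posPart_of_nonpos hx]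
  have hpos : ∑ i, (hA.eigenvalues i)⁺ ≤ c := by
    simpa only [hmul, trace_cfc hA, Complex.ofReal_re] using h _ hχ
  have hsum : ∑ i, hA.eigenvalues i = 0 := by
    rw [sum_eigenvalues_eq_re_trace, htr, Complex.zero_re]
  have habs (x : ℝ) : |x| = 2 * x⁺ - x := by
    linarith [posPart_add_negPart x, posPart_sub_negPart x]
  calc traceNorm A = 2 * ∑ i, (hA.eigenvalues i)⁺ := by
        simp only [traceNorm_eq_sum_abs_eigenvalues hA, habs, Finset.sum_sub_distrib, hsum,
          ← Finset.mul_sum, sub_zero]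
    _ ≤ 2 * c := by gcongr

-- `R` is `(s + A²)⁻¹`, which commutes with `A`.
lemma exists_resolvent_sq {A : Matrix n n ℂ} (hA : A.IsHermitian) {s : ℝ} (hs : 0 < s) :
    ∃ R : Matrix n n ℂ, R.IsHermitian ∧ s • R + A * R * A = 1 ∧
      (R * A).trace = ((∑ i, hA.eigenvalues i / (s + hA.eigenvalues i ^ 2) : ℝ) : ℂ) := by
  have hA' : IsSelfAdjoint A := hA
  have hcont (f : ℝ → ℝ) := continuousOn_spectrum f A
  let f : ℝ → ℝ := fun x => (s + x ^ 2)⁻¹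
  have hRA : cfc f A * A = cfc (fun x => x / (s + x ^ 2)) A := by
    nth_rw 2 [← cfc_id' ℝ A hA']
    rw [← cfc_mul f (fun x => x) A (hcont _)]
    simp only [f, div_eq_inv_mul]
  refine ⟨cfc f A, cfc_predicate f A, ?_, ?_⟩
  · have hARA : A * cfc f A * A = cfc (fun x => x * (x / (s + x ^ 2))) A := by
      rw [mul_assoc, hRA]
      nth_rw 1 [← cfc_id' ℝ A hA']
      rw [← cfc_mul (fun x => x) _ A continuousOn_id (hcont _)]
    rw [hARA, ← cfc_smul s f A (hcont _), ← cfc_add A _ _ (hcont _) (hcont _), ← cfc_one ℝ A hA']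
    congr! 2 with x
    have : s + x ^ 2 ≠ 0 := by positivity
    simp only [f, smul_eq_mul, Pi.one_apply]
    field_simp
  · rw [hRA, trace_cfc hA]

end FunctionalCalculus

section PureState

open scoped MatrixOrder

variable {n : Type*}

lemma pureState_eq_vecMulVec (ψ : n → ℂ) : pureState ψ = Matrix.vecMulVec ψ (star ψ) := rfl

lemma posSemidef_pureState [Finite n] (ψ : n → ℂ) : (pureState ψ).PosSemidef :=
  Matrix.posSemidef_vecMulVec_self_star ψ

variable [Fintype n]

lemma trace_mul_pureState (M : Matrix n n ℂ) (ψ : n → ℂ) :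
    (M * pureState ψ).trace = star ψ ⬝ᵥ M *ᵥ ψ := by
  rw [pureState_eq_vecMulVec, Matrix.mul_vecMulVec, Matrix.trace_vecMulVec, dotProduct_comm]

lemma pureState_mulVec_le {K : Matrix n n ℂ} (hK : K.PosSemidef) {w : n → ℂ}
    (hw : star w ⬝ᵥ K *ᵥ w ≤ 1) : pureState (K *ᵥ w) ≤ K := by
  classical
  set ψ := K *ᵥ w with hψ
  have hψstar : star w ᵥ* K = star ψ := by
    rw [hψ, Matrix.star_mulVec, hK.isHermitian.eq]
  have hdot : star ψ ⬝ᵥ w = star w ⬝ᵥ ψ := by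
    rw [← hψstar, ← Matrix.dotProduct_mulVec]
  -- Completing the square: `1 - w ψ*` kills `w` whenever `⟨w, K w⟩ = 1`.
  have hsquare : (1 - Matrix.vecMulVec w (star ψ))ᴴ * K * (1 - Matrix.vecMulVec w (star ψ)) =
      K - pureState ψ - (1 - star w ⬝ᵥ ψ) • pureState ψ := by
    simp only [Matrix.conjTranspose_sub, Matrix.conjTranspose_one,
      Matrix.conjTranspose_vecMulVec, star_star, sub_mul, mul_sub, one_mul, mul_one,
      Matrix.vecMulVec_mul, Matrix.mul_vecMulVec, Matrix.vecMulVec_mulVec, hψstar, ← hψ, hdot,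
      pureState_eq_vecMulVec, op_smul_eq_smul, Matrix.smul_vecMulVec]
    module
  have hgap : 0 ≤ (1 - star w ⬝ᵥ ψ) • pureState ψ :=
    ((posSemidef_pureState ψ).smul (sub_nonneg.2 hw)).nonneg
  have hpos := (hK.conjTranspose_mul_mul_same (1 - Matrix.vecMulVec w (star ψ))).nonneg
  rw [hsquare, sub_nonneg] at hpos
  exact sub_nonneg.1 (hgap.trans hpos)

variable [DecidableEq n]

lemma le_re_trace_smul_one {M : Matrix n n ℂ} (hM : M.PosSemidef) :
    M ≤ M.trace.re • (1 : Matrix n n ℂ) := by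
  rw [← Algebra.algebraMap_eq_smul_one]
  refine le_algebraMap_of_spectrum_le (fun x hx => ?_) hM.isHermitian
  rw [hM.isHermitian.spectrum_real_eq_range_eigenvalues] at hx
  obtain ⟨i, rfl⟩ := hx
  rw [← sum_eigenvalues_eq_re_trace hM.isHermitian]
  exact Finset.single_le_sum (fun j _ => hM.eigenvalues_nonneg j) (Finset.mem_univ i)

lemma re_trace_pureState_le {v : n → ℂ} {c : ℝ} (hc : 0 ≤ c)
    (h : pureState v ≤ c • (1 : Matrix n n ℂ)) : (pureState v).trace.re ≤ c := by
  obtain ⟨x, hx⟩ : ∃ x : ℝ, star v ⬝ᵥ v = x :=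
    ⟨_, Complex.eq_re_of_ofReal_le (dotProduct_star_self_nonneg v)⟩
  have htr : (pureState v).trace = x := by
    rw [pureState_eq_vecMulVec, Matrix.trace_vecMulVec, dotProduct_comm, hx]
  have hquad : x * x ≤ c * x := by
    have hv := (Matrix.le_iff.1 h).dotProduct_mulVec_nonneg v
    rw [Matrix.sub_mulVec, Matrix.smul_mulVec, Matrix.one_mulVec, pureState_eq_vecMulVec,
      Matrix.vecMulVec_mulVec, op_smul_eq_smul, dotProduct_sub, dotProduct_smul, dotProduct_smul,
      hx, Complex.real_smul, smul_eq_mul, sub_nonneg] at hv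
    exact_mod_cast hv
  rw [htr, Complex.ofReal_re]
  by_contra! hlt
  nlinarith

lemma re_trace_mul_pureState_sub_le {σ Q : Matrix n n ℂ} {ψ : n → ℂ} {s : ℝ} (hs : 0 ≤ s)
    (hσ : σ.PosSemidef) (hψ : pureState ψ ≤ s • (1 : Matrix n n ℂ) + σ) (hQ : IsStarProjection Q) :
    (Q * (pureState ψ - σ)).trace.re ≤ s := by
  have hQH : Qᴴ = Q := hQ.isSelfAdjoint
  have hQQ : Q * Q = Q := hQ.isIdempotentElem
  have htrace (M : Matrix n n ℂ) : (Q * M * Q).trace = (Q * M).trace := by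
    rw [Matrix.trace_mul_comm, ← Matrix.mul_assoc, hQQ]
  have hQσ : (Q * σ * Q).PosSemidef := by
    simpa only [hQH] using hσ.conjTranspose_mul_mul_same Q
  have hQψ : Q * pureState ψ * Q = pureState (Q *ᵥ ψ) := by
    rw [pureState_eq_vecMulVec, pureState_eq_vecMulVec, Matrix.mul_vecMulVec,
      Matrix.vecMulVec_mul, Matrix.star_mulVec, hQH]
  have hle : pureState (Q *ᵥ ψ) ≤ (s + (Q * σ).trace.re) • (1 : Matrix n n ℂ) :=
    calc pureState (Q *ᵥ ψ) = Q * pureState ψ * Q := hQψ.symm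
      _ ≤ Q * (s • 1 + σ) * Q := hQ.isSelfAdjoint.conjugate_le_conjugate hψ
      _ = s • Q + Q * σ * Q := by
        rw [mul_add, add_mul, mul_smul_comm, mul_one, smul_mul_assoc, hQQ]
      _ ≤ s • 1 + (Q * σ * Q).trace.re • 1 :=
        add_le_add (smul_le_smul_of_nonneg_left hQ.le_one hs) (le_re_trace_smul_one hQσ)
      _ = _ := by rw [htrace, add_smul]
  have htr : (Q * pureState ψ).trace.re ≤ s + (Q * σ).trace.re := by
    rw [← htrace, hQψ]
    exact re_trace_pureState_le
      (add_nonneg hs (htrace σ ▸ (Complex.le_def.1 hQσ.trace_nonneg).1)) hle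
  rw [mul_sub, Matrix.trace_sub, Complex.sub_re]
  linarith

end PureState

section GeneralMatrix

variable {m n R : Type*} [Fintype m] [Fintype n]

lemma trace_submatrix_equiv [AddCommMonoid R] (e : m ≃ n) (M : Matrix n n R) :
    (M.submatrix e e).trace = M.trace :=
  e.sum_comp fun i => M i i

lemma isStarProjection_submatrix_equiv [NonUnitalSemiring R] [StarRing R] (e : m ≃ n)
    {P : Matrix n n R} (hP : IsStarProjection P) : IsStarProjection (P.submatrix e e) := by
  refine ⟨?_, hP.isSelfAdjoint.isHermitian.submatrix e⟩
  rw [IsIdempotentElem, Matrix.submatrix_mul_equiv, hP.isIdempotentElem.eq]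

lemma isStarProjection_kronecker_one [CommSemiring R] [StarRing R] [DecidableEq n]
    {P : Matrix m m R} (hP : IsStarProjection P) :
    IsStarProjection (P ⊗ₖ (1 : Matrix n n R)) := by
  refine ⟨?_, ?_⟩
  · rw [IsIdempotentElem, ← Matrix.mul_kronecker_mul, hP.isIdempotentElem.eq, one_mul]
  · rw [IsSelfAdjoint, Matrix.star_eq_conjTranspose, Matrix.conjTranspose_kronecker,
      Matrix.conjTranspose_one, ← Matrix.star_eq_conjTranspose, hP.isSelfAdjoint.star_eq]

end GeneralMatrix

section PartialTrace

variable {a b : Type*} [Fintype a] [Fintype b]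

lemma margA_eq_sum_submatrix (ρ : Matrix (a × b) (a × b) ℂ) :
    margA ρ = ∑ z, ρ.submatrix (·, z) (·, z) := by
  ext
  simp [margA, Matrix.sum_apply]

lemma margB_eq_margA_submatrix (ρ : Matrix (a × b) (a × b) ℂ) :
    margB ρ = margA (ρ.submatrix (Equiv.prodComm b a) (Equiv.prodComm b a)) := rfl

lemma posSemidef_margA {ρ : Matrix (a × b) (a × b) ℂ} (hρ : ρ.PosSemidef) :
    (margA ρ).PosSemidef := by
  rw [margA_eq_sum_submatrix]
  exact Matrix.posSemidef_sum _ fun z _ => hρ.submatrix _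

lemma posSemidef_margB {ρ : Matrix (a × b) (a × b) ℂ} (hρ : ρ.PosSemidef) :
    (margB ρ).PosSemidef := by
  rw [margB_eq_margA_submatrix]
  exact posSemidef_margA (hρ.submatrix _)

lemma isHermitian_margA {ρ : Matrix (a × b) (a × b) ℂ} (hρ : ρ.IsHermitian) :
    (margA ρ).IsHermitian := by
  ext x y
  simp [margA, ← hρ.apply (y, _)]

lemma trace_margA (ρ : Matrix (a × b) (a × b) ℂ) : (margA ρ).trace = ρ.trace :=
  (Fintype.sum_prod_type fun i => ρ i i).symm

lemma trace_margB (ρ : Matrix (a × b) (a × b) ℂ) : (margB ρ).trace = ρ.trace := by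
  rw [margB_eq_margA_submatrix, trace_margA, trace_submatrix_equiv]

lemma trace_kronecker_one_mul [DecidableEq b] (M : Matrix a a ℂ) (X : Matrix (a × b) (a × b) ℂ) :
    ((M ⊗ₖ (1 : Matrix b b ℂ)) * X).trace = (M * margA X).trace := by
  simp only [Matrix.trace, Matrix.diag_apply, Matrix.mul_apply, Fintype.sum_prod_type,
    Matrix.kroneckerMap_apply, Matrix.one_apply, mul_ite, mul_one, mul_zero, ite_mul, zero_mul,
    Finset.sum_ite_eq, Finset.mem_univ, if_true, margA, Matrix.of_apply, Finset.mul_sum]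
  exact Finset.sum_congr rfl fun x _ => Finset.sum_comm

/-- The correlation operator `ρ_{AB} − ρ_A ⊗ ρ_B` of a bipartite state, whose trace norm measures
how far the state is from the product of its marginals. -/
def correlation (ρ : Matrix (a × b) (a × b) ℂ) : Matrix (a × b) (a × b) ℂ :=
  ρ - margA ρ ⊗ₖ margB ρ

lemma isHermitian_correlation {ρ : Matrix (a × b) (a × b) ℂ} (hρ : ρ.IsHermitian) :
    (correlation ρ).IsHermitian := by
  refine hρ.sub ?_
  rw [Matrix.IsHermitian, Matrix.conjTranspose_kronecker, (isHermitian_margA hρ).eq,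
    margB_eq_margA_submatrix, (isHermitian_margA (hρ.submatrix _)).eq]

lemma trace_correlation {ρ : Matrix (a × b) (a × b) ℂ} (hρ : ρ.trace = 1) :
    (correlation ρ).trace = 0 := by
  rw [correlation, Matrix.trace_sub, Matrix.trace_kronecker, trace_margA, trace_margB, hρ,
    mul_one, sub_self]

lemma correlation_submatrix_prodComm (ρ : Matrix (a × b) (a × b) ℂ) :
    correlation (ρ.submatrix (Equiv.prodComm b a) (Equiv.prodComm b a)) =
      (correlation ρ).submatrix (Equiv.prodComm b a) (Equiv.prodComm b a) := by
  ext x y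
  simp [correlation, margA, margB, mul_comm]

lemma margA_correlation_submatrix_prodAssoc {c : Type*} [Fintype c]
    (τ : Matrix ((a × b) × c) ((a × b) × c) ℂ) :
    let e := Equiv.prodAssoc a b c
    margA ((correlation (τ.submatrix e.symm e.symm)).submatrix e e) = correlation (margA τ) := by
  ext ⟨x, y⟩ ⟨x', y'⟩
  simp only [margA, margB, correlation, Matrix.of_apply, Matrix.sub_apply, Matrix.submatrix_apply,
    Matrix.kroneckerMap_apply, Equiv.prodAssoc_apply, Equiv.prodAssoc_symm_apply,
    Finset.sum_sub_distrib, Fintype.sum_prod_type, ← Finset.mul_sum]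
  rw [Finset.sum_comm (γ := c)]

end PartialTrace

section Purification

variable {n : Type*} [Fintype n]

lemma exists_margA_pureState_eq {ρ : Matrix n n ℂ} (hρ : ρ.PosSemidef) :
    ∃ (m : ℕ) (ψ : n × Fin m → ℂ), margA (pureState ψ) = ρ := by
  obtain ⟨m, v, rfl⟩ := Matrix.posSemidef_iff_eq_sum_vecMulVec.1 hρ
  refine ⟨m, fun x => v x.2 x.1, ?_⟩
  rw [margA_eq_sum_submatrix]
  rfl

end Purification

section PureBound

open scoped MatrixOrder

variable {a b : Type*} [Fintype a] [DecidableEq a] [Fintype b] [DecidableEq b]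

lemma one_kronecker_margB_mulVec (ψ : a × b → ℂ) :
    ((1 : Matrix a a ℂ) ⊗ₖ margB (pureState ψ)) *ᵥ ψ =
      (margA (pureState ψ) ⊗ₖ (1 : Matrix b b ℂ)) *ᵥ ψ := by
  ext ⟨x, y⟩
  simp only [Matrix.mulVec, dotProduct, Fintype.sum_prod_type, Matrix.kroneckerMap_apply,
    Matrix.one_apply, ite_mul, mul_ite, one_mul, mul_one, zero_mul, mul_zero, margA, margB,
    pureState, Matrix.of_apply, Finset.sum_ite_eq, Finset.sum_mul, Finset.mem_univ, if_true,
    Finset.sum_ite_irrel, Finset.sum_const_zero]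
  rw [Finset.sum_comm]
  exact Finset.sum_congr rfl fun _ _ => Finset.sum_congr rfl fun _ _ => by ring

lemma smul_one_add_kronecker_mulVec {ψ : a × b → ℂ} {s : ℝ} {R : Matrix a a ℂ}
    (hR : s • R + margA (pureState ψ) * R * margA (pureState ψ) = 1) :
    (s • 1 + margA (pureState ψ) ⊗ₖ margB (pureState ψ)) *ᵥ ((R ⊗ₖ (1 : Matrix b b ℂ)) *ᵥ ψ) =
      ψ := by
  set A := margA (pureState ψ)
  set B := margB (pureState ψ)
  have hAB : (A ⊗ₖ B) *ᵥ ((R ⊗ₖ (1 : Matrix b b ℂ)) *ᵥ ψ) =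
      ((A * R * A) ⊗ₖ (1 : Matrix b b ℂ)) *ᵥ ψ :=
    calc (A ⊗ₖ B) *ᵥ ((R ⊗ₖ (1 : Matrix b b ℂ)) *ᵥ ψ)
        = ((A * R) ⊗ₖ (1 : Matrix b b ℂ)) *ᵥ (((1 : Matrix a a ℂ) ⊗ₖ B) *ᵥ ψ) := by
          simp only [Matrix.mulVec_mulVec, ← Matrix.mul_kronecker_mul, mul_one, one_mul]
      _ = ((A * R) ⊗ₖ (1 : Matrix b b ℂ)) *ᵥ ((A ⊗ₖ (1 : Matrix b b ℂ)) *ᵥ ψ) := by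
          rw [one_kronecker_margB_mulVec]
      _ = _ := by rw [Matrix.mulVec_mulVec, ← Matrix.mul_kronecker_mul, mul_one]
  rw [Matrix.add_mulVec, hAB, Matrix.smul_mulVec, Matrix.one_mulVec, ← Matrix.smul_mulVec,
    ← Matrix.smul_kronecker, ← Matrix.add_mulVec, ← Matrix.add_kronecker, hR,
    Matrix.one_kronecker_one, Matrix.one_mulVec]

lemma pureState_le_smul_one_add_kronecker {ψ : a × b → ℂ} (hψ : (pureState ψ).trace = 1)
    {s : ℝ} (hs : 0 < s) (hent : entropy (margA (pureState ψ)) ≤ s ^ 2) :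
    pureState ψ ≤ s • 1 + margA (pureState ψ) ⊗ₖ margB (pureState ψ) := by
  have hτ := posSemidef_pureState ψ
  have hA := posSemidef_margA hτ
  obtain ⟨R, hR, hRA, htr⟩ := exists_resolvent_sq hA.isHermitian hs
  have hK : (s • 1 + margA (pureState ψ) ⊗ₖ margB (pureState ψ)).PosSemidef :=
    (Matrix.PosSemidef.one.smul hs.le).add (hA.kronecker (posSemidef_margB hτ))
  have hKw := smul_one_add_kronecker_mulVec hRA
  have hsum : ∑ i, hA.isHermitian.eigenvalues i = 1 := by
    rw [sum_eigenvalues_eq_re_trace, trace_margA, hψ, Complex.one_re]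
  rw [entropy_eq_sum_negMulLog hA.isHermitian] at hent
  have hw : star ((R ⊗ₖ (1 : Matrix b b ℂ)) *ᵥ ψ) ⬝ᵥ ψ ≤ 1 := by
    rw [Matrix.star_mulVec, ← Matrix.dotProduct_mulVec, Matrix.conjTranspose_kronecker, hR.eq,
      Matrix.conjTranspose_one, ← trace_mul_pureState, trace_kronecker_one_mul, htr]
    exact_mod_cast sum_div_add_sq_le_one hA.eigenvalues_nonneg hsum hs hent
  have := pureState_mulVec_le hK (w := (R ⊗ₖ (1 : Matrix b b ℂ)) *ᵥ ψ) (by rwa [hKw])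
  rwa [hKw] at this

end PureBound

section MixedBound

variable {a b : Type*} [Fintype a] [Fintype b]

lemma re_trace_mul_correlation_pureState_le [DecidableEq a] {ψ : a × b → ℂ}
    (hψ : (pureState ψ).trace = 1) {s : ℝ} (hs : 0 < s)
    (hent : entropy (margA (pureState ψ)) ≤ s ^ 2) {Q : Matrix (a × b) (a × b) ℂ}
    (hQ : IsStarProjection Q) :
    (Q * correlation (pureState ψ)).trace.re ≤ s := by
  classical
  have hτ := posSemidef_pureState ψ
  exact re_trace_mul_pureState_sub_le hs.le ((posSemidef_margA hτ).kronecker (posSemidef_margB hτ))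
    (pureState_le_smul_one_add_kronecker hψ hs hent) hQ

lemma re_trace_mul_correlation_le_of_entropy_le_sq [DecidableEq a]
    {ρ : Matrix (a × b) (a × b) ℂ} (hρ : IsDensityMatrix ρ) {s : ℝ} (hs : 0 < s)
    (hent : entropy (margA ρ) ≤ s ^ 2) {P : Matrix (a × b) (a × b) ℂ} (hP : IsStarProjection P) :
    (P * correlation ρ).trace.re ≤ s := by
  classical
  obtain ⟨m, ψ, rfl⟩ := exists_margA_pureState_eq hρ.1
  -- Regrouped as a state on `a × (b × Fin m)`, the purification still has first marginal `margA ρ`.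
  let e := Equiv.prodAssoc a b (Fin m)
  let φ : a × b × Fin m → ℂ := ψ ∘ e.symm
  have hφ : (pureState φ).trace = 1 := by
    rw [← hρ.2, trace_margA]
    exact trace_submatrix_equiv e.symm (pureState ψ)
  have hφA : margA (pureState φ) = margA (margA (pureState ψ)) := by
    ext
    simp [margA, pureState, φ, e, Fintype.sum_prod_type]
  have hQ := isStarProjection_submatrix_equiv e.symm
    (isStarProjection_kronecker_one (n := Fin m) hP)
  calc (P * correlation (margA (pureState ψ))).trace.re
      = (P * margA ((correlation (pureState φ)).submatrix e e)).trace.re := by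
        rw [← margA_correlation_submatrix_prodAssoc]
        rfl
    _ = ((P ⊗ₖ (1 : Matrix (Fin m) (Fin m) ℂ)) *
          (correlation (pureState φ)).submatrix e e).trace.re := by
        rw [trace_kronecker_one_mul]
    _ = ((P ⊗ₖ (1 : Matrix (Fin m) (Fin m) ℂ)).submatrix e.symm e.symm *
          correlation (pureState φ)).trace.re := by
        rw [← trace_submatrix_equiv e.symm, ← Matrix.submatrix_mul_equiv _ _ _ e.symm]
        simp
    _ ≤ s := re_trace_mul_correlation_pureState_le hφ hs (hφA ▸ hent) hQ

lemma re_trace_mul_correlation_le_sqrt_entropy_margA [DecidableEq a]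
    {ρ : Matrix (a × b) (a × b) ℂ} (hρ : IsDensityMatrix ρ) {P : Matrix (a × b) (a × b) ℂ}
    (hP : IsStarProjection P) :
    (P * correlation ρ).trace.re ≤ √(entropy (margA ρ)) := by
  refine le_of_forall_gt_imp_ge_of_dense fun s hs => ?_
  have hs0 : 0 < s := (Real.sqrt_nonneg _).trans_lt hs
  exact re_trace_mul_correlation_le_of_entropy_le_sq hρ hs0 ((Real.sqrt_lt' hs0).1 hs).le hP

lemma re_trace_mul_correlation_le_sqrt_entropy_margB [DecidableEq b]
    {ρ : Matrix (a × b) (a × b) ℂ} (hρ : IsDensityMatrix ρ) {P : Matrix (a × b) (a × b) ℂ}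
    (hP : IsStarProjection P) :
    (P * correlation ρ).trace.re ≤ √(entropy (margB ρ)) := by
  let e := Equiv.prodComm b a
  have hρe : IsDensityMatrix (ρ.submatrix e e) :=
    ⟨hρ.1.submatrix e, (trace_submatrix_equiv e ρ).trans hρ.2⟩
  calc (P * correlation ρ).trace.re
      = (P.submatrix e e * correlation (ρ.submatrix e e)).trace.re := by
        rw [correlation_submatrix_prodComm, Matrix.submatrix_mul_equiv, trace_submatrix_equiv]
    _ ≤ √(entropy (margB ρ)) :=
        re_trace_mul_correlation_le_sqrt_entropy_margA hρe (isStarProjection_submatrix_equiv e hP)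

end MixedBound

/-- For a density matrix `ρ_{AB}` on `H_A ⊗ H_B` with marginals `ρ_A`
and `ρ_B`, the trace-norm distance from the product of its marginals is bounded by the
smaller single-system entropy: `‖ρ_{AB} − ρ_A ⊗ ρ_B‖₁ ≤ 2·√(min(s(ρ_A), s(ρ_B)))`. -/
theorem traceNorm_sub_prod_marginals_le
    {a b : Type*} [Fintype a] [DecidableEq a] [Nonempty a]
    [Fintype b] [DecidableEq b] [Nonempty b]
    (ρ : Matrix (a × b) (a × b) ℂ) (hρ : IsDensityMatrix ρ) :
    traceNorm (ρ - margA ρ ⊗ₖ margB ρ) ≤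
      2 * Real.sqrt (min (entropy (margA ρ)) (entropy (margB ρ))) := by
  refine traceNorm_le_of_forall_isStarProjection (A := correlation ρ)
    (isHermitian_correlation hρ.1.isHermitian) (trace_correlation hρ.2) fun P hP => ?_
  rcases min_choice (entropy (margA ρ)) (entropy (margB ρ)) with hmin | hmin
  · rw [hmin]
    exact re_trace_mul_correlation_le_sqrt_entropy_margA hρ hP
  · rw [hmin]
    exact re_trace_mul_correlation_le_sqrt_entropy_margB hρ hP

end Paper
end
end

section
/- Let A be a Hermitian operator on a nonzero finite-dimensional complex Hilbert space K, with largest eigenvalue λmax and smallest eigenvalue λmin. Then the maximum over all density matrices ρ on K of the variance Var_ρ(A) = Tr[ρ A²] − (Tr[ρ A])² exists and equals (λmax − λmin)²/4; in particular it is attained by the pure state (|λmin⟩ + |λmax⟩)/√2 built from unit eigenvectors for λmin and λmax. -/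
open scoped BigOperators Kronecker Matrix ComplexOrder

noncomputable section
namespace Paper

variable {N : ℕ} {d : Fin N → Type*} [∀ k, Fintype (d k)] [∀ k, DecidableEq (d k)]

/-- Variance of a Hermitian operator in a state: `Var_ρ(A) = Tr[ρ A²] − (Tr[ρ A])²`. -/
noncomputable def varH {n : Type*} [Fintype n] (ρ A : Matrix n n ℂ) : ℝ :=
  (ρ * (A * A)).trace.re - ((ρ * A).trace.re) ^ 2

/-!
If `a ≤ A ≤ b` then `(b - A) (A - a)` is positive semidefinite; taking its expectation in `ρ` gives
the Bhatia–Davis bound `Var_ρ(A) ≤ (b - Tr[ρ A]) (Tr[ρ A] - a)`, which is at most `(b - a)² / 4`.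
Equality comes from the law of total variance: eigenstates have variance zero, so in the even
mixture of eigenstates for `a` and `b` only the variance `(b - a)² / 4` between the two eigenvalues
remains. For orthogonal eigenvectors the superposition has the same moments of `A` as the mixture,
since the off-diagonal terms do not contribute to the trace.
-/

section Eigenvector

open Matrix

theorem mul_self_mulVec_of_mulVec_eq_smul {n R : Type*} [Fintype n] [CommSemiring R]
    {A : Matrix n n R} {v : n → R} {c : R} (h : A *ᵥ v = c • v) :
    (A * A) *ᵥ v = c ^ 2 • v := by
  rw [← mulVec_mulVec, h, mulVec_smul, h, smul_smul, sq]

theorem exists_unit_eigenvector {n 𝕜 : Type*} [Fintype n] [DecidableEq n] [RCLike 𝕜]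
    {A : Matrix n n 𝕜} (hA : A.IsHermitian) (i : n) :
    ∃ v : n → 𝕜, star v ⬝ᵥ v = 1 ∧ A *ᵥ v = (hA.eigenvalues i : 𝕜) • v := by
  refine ⟨hA.eigenvectorBasis i, ?_, ?_⟩
  · rw [dotProduct_comm, ← EuclideanSpace.inner_eq_star_dotProduct, inner_self_eq_norm_sq_to_K,
      hA.eigenvectorBasis.norm_eq_one, RCLike.ofReal_one, one_pow]
  · rw [hA.mulVec_eigenvectorBasis, RCLike.real_smul_eq_coe_smul (K := 𝕜)]

end Eigenvector

section UpperBound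

open Matrix
open scoped MatrixOrder

theorem trace_mul_nonneg_of_posSemidef {n 𝕜 : Type*} [Fintype n] [RCLike 𝕜] {A B : Matrix n n 𝕜}
    (hA : A.PosSemidef) (hB : B.PosSemidef) : 0 ≤ (A * B).trace := by
  classical
  obtain ⟨C, rfl⟩ := CStarAlgebra.nonneg_iff_eq_star_mul_self.mp hA.nonneg
  rw [mul_assoc, trace_mul_comm]
  exact (hB.mul_mul_conjTranspose_same C).trace_nonneg

variable {n : Type*} [Fintype n] [DecidableEq n]

theorem posSemidef_sub_mul_sub {𝕜 : Type*} [RCLike 𝕜] {A : Matrix n n 𝕜} {a b : ℝ}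
    (ha : algebraMap ℝ _ a ≤ A) (hb : A ≤ algebraMap ℝ _ b) :
    ((algebraMap ℝ _ b - A) * (A - algebraMap ℝ _ a)).PosSemidef := by
  have hcomm : Commute (algebraMap ℝ _ b - A) (A - algebraMap ℝ _ a) :=
    ((Algebra.commute_algebraMap_left b A).sub_left (.refl A)).sub_right
      (Algebra.commute_algebraMap_right a _)
  exact nonneg_iff_posSemidef.mp <| hcomm.mul_nonneg (sub_nonneg.mpr hb) (sub_nonneg.mpr ha)

/-- The **Bhatia–Davis inequality**. -/
theorem varH_le_sub_mul_sub {ρ A : Matrix n n ℂ} (hρ : IsDensityMatrix ρ) {a b : ℝ}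
    (ha : algebraMap ℝ _ a ≤ A) (hb : A ≤ algebraMap ℝ _ b) :
    varH ρ A ≤ (b - (ρ * A).trace.re) * ((ρ * A).trace.re - a) := by
  have hnonneg : 0 ≤ (ρ * ((algebraMap ℝ _ b - A) * (A - algebraMap ℝ _ a))).trace.re :=
    (Complex.nonneg_iff.mp <|
      trace_mul_nonneg_of_posSemidef hρ.1 (posSemidef_sub_mul_sub ha hb)).1
  have hexpand : (ρ * ((algebraMap ℝ _ b - A) * (A - algebraMap ℝ _ a))).trace.re =
      (a + b) * (ρ * A).trace.re - (ρ * (A * A)).trace.re - a * b := by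
    simp only [Algebra.algebraMap_eq_smul_one, mul_sub, sub_mul, smul_mul_assoc, mul_smul_comm,
      one_mul, mul_one, trace_sub, trace_smul, hρ.2, Complex.sub_re, Complex.smul_re,
      Complex.one_re, smul_eq_mul]
    ring
  rw [varH]
  linarith

/-- **Popoviciu's inequality**. -/
theorem varH_le_sq_div_four {ρ A : Matrix n n ℂ} (hρ : IsDensityMatrix ρ) {a b : ℝ}
    (ha : algebraMap ℝ _ a ≤ A) (hb : A ≤ algebraMap ℝ _ b) :
    varH ρ A ≤ (b - a) ^ 2 / 4 := by
  have hBhatiaDavis := varH_le_sub_mul_sub hρ ha hb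
  linarith [sq_nonneg (a + b - 2 * (ρ * A).trace.re)]

theorem varH_le_sq_div_four_of_eigenvalues_mem_Icc {ρ A : Matrix n n ℂ} (hρ : IsDensityMatrix ρ)
    (hA : A.IsHermitian) {a b : ℝ} (hab : ∀ i, hA.eigenvalues i ∈ Set.Icc a b) :
    varH ρ A ≤ (b - a) ^ 2 / 4 := by
  have hspec : spectrum ℝ A ⊆ Set.Icc a b := by
    rw [hA.spectrum_real_eq_range_eigenvalues]
    exact Set.range_subset_iff.mpr hab
  exact varH_le_sq_div_four hρ
    ((algebraMap_le_iff_le_spectrum hA).mpr fun _ hx => (hspec hx).1)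
    ((le_algebraMap_iff_spectrum_le hA).mpr fun _ hx => (hspec hx).2)

end UpperBound

section Attainment

open Matrix

theorem pureState_eq_vecMulVec_s10 {n : Type*} (v : n → ℂ) :
    pureState v = vecMulVec v (star v) := rfl

variable {n : Type*} [Fintype n]

theorem convex_setOf_isDensityMatrix : Convex ℝ {ρ : Matrix n n ℂ | IsDensityMatrix ρ} := by
  rintro ρ ⟨hρ, hρ_trace⟩ σ ⟨hσ, hσ_trace⟩ p q hp hq hpq
  refine ⟨(hρ.smul hp).add (hσ.smul hq), ?_⟩
  rw [trace_add, trace_smul, trace_smul, hρ_trace, hσ_trace, ← add_smul, hpq, one_smul]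

/-- The **law of total variance** for a mixture of two states. -/
theorem varH_smul_add_smul (ρ σ A : Matrix n n ℂ) {p q : ℝ} (hpq : p + q = 1) :
    varH (p • ρ + q • σ) A =
      p * varH ρ A + q * varH σ A + p * q * ((σ * A).trace.re - (ρ * A).trace.re) ^ 2 := by
  obtain rfl : q = 1 - p := by linarith
  simp only [varH, add_mul, smul_mul_assoc, trace_add, trace_smul, Complex.add_re,
    Complex.smul_re, smul_eq_mul]
  ring

theorem trace_pureState_mul (v : n → ℂ) (B : Matrix n n ℂ) :
    (pureState v * B).trace = star v ⬝ᵥ B *ᵥ v := by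
  rw [pureState_eq_vecMulVec_s10, vecMulVec_mul, trace_vecMulVec, dotProduct_comm, dotProduct_mulVec]

theorem isDensityMatrix_pureState {v : n → ℂ} (hv : star v ⬝ᵥ v = 1) :
    IsDensityMatrix (pureState v) := by
  refine ⟨posSemidef_vecMulVec_self_star v, ?_⟩
  rw [pureState_eq_vecMulVec_s10, trace_vecMulVec, dotProduct_comm, hv]

theorem trace_pureState_mul_of_mulVec_eq_smul {B : Matrix n n ℂ} {v : n → ℂ} {c : ℂ}
    (hv : star v ⬝ᵥ v = 1) (hBv : B *ᵥ v = c • v) : (pureState v * B).trace = c := by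
  rw [trace_pureState_mul, hBv, dotProduct_smul, hv, smul_eq_mul, mul_one]

theorem varH_pureState_of_mulVec_eq_smul {A : Matrix n n ℂ} {v : n → ℂ} {a : ℝ}
    (hv : star v ⬝ᵥ v = 1) (hAv : A *ᵥ v = (a : ℂ) • v) : varH (pureState v) A = 0 := by
  rw [varH, trace_pureState_mul_of_mulVec_eq_smul hv hAv,
    trace_pureState_mul_of_mulVec_eq_smul hv (mul_self_mulVec_of_mulVec_eq_smul hAv),
    ← Complex.ofReal_pow, Complex.ofReal_re, Complex.ofReal_re, sub_self]

theorem varH_mixture_of_mulVec_eq_smul {A : Matrix n n ℂ} {v w : n → ℂ} {a b p q : ℝ}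
    (hv : star v ⬝ᵥ v = 1) (hw : star w ⬝ᵥ w = 1)
    (hAv : A *ᵥ v = (a : ℂ) • v) (hAw : A *ᵥ w = (b : ℂ) • w) (hpq : p + q = 1) :
    varH (p • pureState v + q • pureState w) A = p * q * (b - a) ^ 2 := by
  rw [varH_smul_add_smul _ _ _ hpq, varH_pureState_of_mulVec_eq_smul hv hAv,
    varH_pureState_of_mulVec_eq_smul hw hAw, trace_pureState_mul_of_mulVec_eq_smul hv hAv,
    trace_pureState_mul_of_mulVec_eq_smul hw hAw, Complex.ofReal_re, Complex.ofReal_re,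
    mul_zero, mul_zero, add_zero, zero_add]

theorem varH_even_mixture_of_mulVec_eq_smul {A : Matrix n n ℂ} {v w : n → ℂ} {a b : ℝ}
    (hv : star v ⬝ᵥ v = 1) (hw : star w ⬝ᵥ w = 1)
    (hAv : A *ᵥ v = (a : ℂ) • v) (hAw : A *ᵥ w = (b : ℂ) • w) :
    varH ((1 / 2 : ℝ) • pureState v + (1 / 2 : ℝ) • pureState w) A = (b - a) ^ 2 / 4 := by
  rw [varH_mixture_of_mulVec_eq_smul hv hw hAv hAw (add_halves 1)]
  ring

theorem trace_pureState_superposition_mul {B : Matrix n n ℂ} {v w : n → ℂ} {s t : ℂ}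
    (hBv : B *ᵥ v = s • v) (hBw : B *ᵥ w = t • w) (hvw : star v ⬝ᵥ w = 0) (c d : ℂ) :
    (pureState (c • v + d • w) * B).trace =
      ((Complex.normSq c • pureState v + Complex.normSq d • pureState w) * B).trace := by
  have hwv : star w ⬝ᵥ v = 0 := by rw [star_dotProduct, hvw, star_zero]
  simp only [add_mul, smul_mul_assoc, trace_add, trace_smul, trace_pureState_mul, mulVec_add,
    mulVec_smul, hBv, hBw, star_add, star_smul, add_dotProduct, dotProduct_add, smul_dotProduct,
    dotProduct_smul, hvw, hwv, smul_eq_mul, Complex.real_smul,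
    Complex.normSq_eq_conj_mul_self, starRingEnd_apply]
  ring

theorem varH_pureState_superposition {A : Matrix n n ℂ} {v w : n → ℂ} {s t : ℂ}
    (hAv : A *ᵥ v = s • v) (hAw : A *ᵥ w = t • w) (hvw : star v ⬝ᵥ w = 0) (c d : ℂ) :
    varH (pureState (c • v + d • w)) A =
      varH (Complex.normSq c • pureState v + Complex.normSq d • pureState w) A := by
  rw [varH, varH, trace_pureState_superposition_mul hAv hAw hvw,
    trace_pureState_superposition_mul (mul_self_mulVec_of_mulVec_eq_smul hAv)
      (mul_self_mulVec_of_mulVec_eq_smul hAw) hvw]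

theorem varH_pureState_inv_sqrt_two_superposition {A : Matrix n n ℂ} {v w : n → ℂ} {a b : ℝ}
    (hv : star v ⬝ᵥ v = 1) (hw : star w ⬝ᵥ w = 1)
    (hAv : A *ᵥ v = (a : ℂ) • v) (hAw : A *ᵥ w = (b : ℂ) • w) (hvw : star v ⬝ᵥ w = 0) :
    varH (pureState ((Real.sqrt 2 : ℂ)⁻¹ • v + (Real.sqrt 2 : ℂ)⁻¹ • w)) A = (b - a) ^ 2 / 4 := by
  have hhalf : Complex.normSq (Real.sqrt 2 : ℂ)⁻¹ = 1 / 2 := by simp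
  rw [varH_pureState_superposition hAv hAw hvw, hhalf,
    varH_even_mixture_of_mulVec_eq_smul hv hw hAv hAw]

theorem star_dotProduct_self_eq_one_iff {v : n → ℂ} :
    star v ⬝ᵥ v = 1 ↔ ∑ x, Complex.normSq (v x) = 1 := by
  have hnormSq : star v ⬝ᵥ v = ((∑ x, Complex.normSq (v x) : ℝ) : ℂ) := by
    simp only [dotProduct, Pi.star_apply, Complex.ofReal_sum, Complex.normSq_eq_conj_mul_self,
      starRingEnd_apply]
  rw [hnormSq, Complex.ofReal_eq_one]

end Attainment

/-- For a Hermitian operator `A` with largest eigenvalue `λmax` and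
smallest eigenvalue `λmin`, the maximum over density matrices of `Var_ρ(A)` exists and
equals `(λmax − λmin)²/4`; in particular it is attained by the pure state
`(|λmin⟩ + |λmax⟩)/√2` built from (orthogonal) unit eigenvectors for `λmin` and `λmax`. -/
theorem max_variance_hermitian
    {n : Type*} [Fintype n] [DecidableEq n] [Nonempty n]
    (A : Matrix n n ℂ) (hA : A.IsHermitian)
    (lmax lmin : ℝ)
    (hmax : IsGreatest (Set.range hA.eigenvalues) lmax)
    (hmin : IsLeast (Set.range hA.eigenvalues) lmin) :
    IsGreatest {x : ℝ | ∃ ρ : Matrix n n ℂ, IsDensityMatrix ρ ∧ x = varH ρ A}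
        ((lmax - lmin) ^ 2 / 4) ∧
      ∀ v w : n → ℂ,
        (∑ x, Complex.normSq (v x)) = 1 → (∑ x, Complex.normSq (w x)) = 1 →
        A.mulVec v = (lmin : ℂ) • v → A.mulVec w = (lmax : ℂ) • w →
        (∑ x, (starRingEnd ℂ) (v x) * w x) = 0 →
        varH (pureState fun x => ((Real.sqrt 2 : ℂ))⁻¹ * (v x + w x)) A =
          (lmax - lmin) ^ 2 / 4 := by
  refine ⟨⟨?attained, ?upperBound⟩, fun v w hv hw hAv hAw hvw => ?superposition⟩
  case attained =>
    obtain ⟨i, rfl⟩ := hmax.1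
    obtain ⟨j, rfl⟩ := hmin.1
    obtain ⟨v, hv, hAv⟩ := exists_unit_eigenvector hA j
    obtain ⟨w, hw, hAw⟩ := exists_unit_eigenvector hA i
    exact ⟨_, convex_setOf_isDensityMatrix (isDensityMatrix_pureState hv)
      (isDensityMatrix_pureState hw) one_half_pos.le one_half_pos.le (add_halves 1),
      (varH_even_mixture_of_mulVec_eq_smul hv hw hAv hAw).symm⟩
  case upperBound =>
    rintro _ ⟨ρ, hρ, rfl⟩
    exact varH_le_sq_div_four_of_eigenvalues_mem_Icc hρ hA
      fun i => ⟨hmin.2 ⟨i, rfl⟩, hmax.2 ⟨i, rfl⟩⟩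
  case superposition =>
    simp only [mul_add]
    exact varH_pureState_inv_sqrt_two_superposition (star_dotProduct_self_eq_one_iff.mpr hv)
      (star_dotProduct_self_eq_one_iff.mpr hw) hAv hAw hvw

end Paper
end
end
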